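/- (First-order equivalence of the clipped surrogate and the linearized surrogate.) Let E be a real normed vector space, θ₀ ∈ E, ε ∈ (0,1), A ∈ ℝ, and let ℓ : E → ℝ be differentiable at θ₀; define the importance ratio ρ(θ) = exp(ℓ(θ) − ℓ(θ₀)). Then the clipped surrogate f(θ) = min(ρ(θ)·A, clip(ρ(θ), 1−ε, 1+ε)·A) and the REINFORCE surrogate g(θ) = A·(ℓ(θ) − ℓ(θ₀)) + A take the same value at θ₀ (namely A) and have the same Fréchet derivative at θ₀ (namely A·Dℓ(θ₀)). -/

import Mathlib

/-- Clipping operator: clip(x, a, b) = max(a, min(x, b)). -/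
noncomputable def clip (x a b : ℝ) : ℝ := max a (min x b)

/-!
At `θ₀` the importance ratio equals `1`, an interior point of the clipping interval, so by
continuity clipping is inactive near `θ₀` and the clipped surrogate coincides there with the
unclipped surrogate `ρ(θ) * A`. Since `ρ` is an exponential, `Dρ = ρ • Dℓ`, which at `ρ = 1` is
the derivative of the log-probability itself.
-/

open Set Topology

section Clip

variable {x a b : ℝ}

/-- The per-token clipped surrogate of PPO and GRPO as a function of the importance ratio `x`, for
the advantage `A`. The endpoints `a` and `b` of the clipping interval are independent parameters,
so that asymmetric clipping is covered; the usual choice is `a = 1 - ε`, `b = 1 + ε`. -/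
noncomputable def clippedSurrogate (a b A x : ℝ) : ℝ :=
  min (x * A) (clip x a b * A)

theorem clip_of_mem_Icc (hx : x ∈ Icc a b) : clip x a b = x := by
  rw [clip, min_eq_left hx.2, max_eq_right hx.1]

theorem clippedSurrogate_of_mem_Icc (hx : x ∈ Icc a b) (A : ℝ) :
    clippedSurrogate a b A x = x * A := by
  rw [clippedSurrogate, clip_of_mem_Icc hx, min_self]

theorem clippedSurrogate_eventuallyEq_mul (hx : x ∈ Ioo a b) (A : ℝ) :
    clippedSurrogate a b A =ᶠ[𝓝 x] fun y ↦ y * A := by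
  filter_upwards [Icc_mem_nhds hx.1 hx.2] with y hy
  exact clippedSurrogate_of_mem_Icc hy A

theorem hasDerivAt_clippedSurrogate (hx : x ∈ Ioo a b) (A : ℝ) :
    HasDerivAt (clippedSurrogate a b A) A x :=
  (hasDerivAt_mul_const A).congr_of_eventuallyEq (clippedSurrogate_eventuallyEq_mul hx A)

end Clip

section PolicyRatio

/-- The importance ratio `ρ(θ)` of the policy at `θ` to the sampling policy at `θ₀`, where `ℓ` is
the log-probability of the sampled token. -/
noncomputable def importanceRatio {E : Type*} (ℓ : E → ℝ) (θ₀ θ : E) : ℝ :=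
  Real.exp (ℓ θ - ℓ θ₀)

/-- The REINFORCE surrogate, i.e. advantage times log-probability, with the additive constant
chosen so that its value at the sampling parameter `θ₀` is the advantage `A`. -/
noncomputable def reinforceSurrogate {E : Type*} (ℓ : E → ℝ) (θ₀ : E) (A : ℝ) (θ : E) : ℝ :=
  A * (ℓ θ - ℓ θ₀) + A

theorem importanceRatio_self {E : Type*} (ℓ : E → ℝ) (θ₀ : E) : importanceRatio ℓ θ₀ θ₀ = 1 := by
  rw [importanceRatio, sub_self, Real.exp_zero]

theorem reinforceSurrogate_self {E : Type*} (ℓ : E → ℝ) (θ₀ : E) (A : ℝ) :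
    reinforceSurrogate ℓ θ₀ A θ₀ = A := by
  rw [reinforceSurrogate, sub_self, mul_zero, zero_add]

variable {E : Type*} [NormedAddCommGroup E] [NormedSpace ℝ E]
  {ℓ : E → ℝ} {ℓ' : E →L[ℝ] ℝ} {θ : E} {a b : ℝ}

theorem hasFDerivAt_importanceRatio (hℓ : HasFDerivAt ℓ ℓ' θ) (θ₀ : E) :
    HasFDerivAt (importanceRatio ℓ θ₀) (importanceRatio ℓ θ₀ θ • ℓ') θ :=
  (hℓ.sub_const (ℓ θ₀)).exp

theorem hasFDerivAt_reinforceSurrogate (hℓ : HasFDerivAt ℓ ℓ' θ) (θ₀ : E) (A : ℝ) :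
    HasFDerivAt (reinforceSurrogate ℓ θ₀ A) (A • ℓ') θ :=
  ((hℓ.sub_const (ℓ θ₀)).const_mul A).add_const A

theorem hasFDerivAt_clippedSurrogate_importanceRatio (hℓ : HasFDerivAt ℓ ℓ' θ) {θ₀ : E}
    (hρ : importanceRatio ℓ θ₀ θ ∈ Ioo a b) (A : ℝ) :
    HasFDerivAt (fun η ↦ clippedSurrogate a b A (importanceRatio ℓ θ₀ η))
      (A • importanceRatio ℓ θ₀ θ • ℓ') θ :=
  (hasDerivAt_clippedSurrogate hρ A).comp_hasFDerivAt θ (hasFDerivAt_importanceRatio hℓ θ₀)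

theorem clipped_surrogate_first_order_equiv_reinforce_general {θ₀ : E} (h1 : 1 ∈ Ioo a b)
    (A : ℝ) (hℓ : HasFDerivAt ℓ ℓ' θ₀) :
    clippedSurrogate a b A (importanceRatio ℓ θ₀ θ₀) = A ∧
    reinforceSurrogate ℓ θ₀ A θ₀ = A ∧
    HasFDerivAt (fun θ ↦ clippedSurrogate a b A (importanceRatio ℓ θ₀ θ)) (A • ℓ') θ₀ ∧
    HasFDerivAt (reinforceSurrogate ℓ θ₀ A) (A • ℓ') θ₀ := by
  have hρ : importanceRatio ℓ θ₀ θ₀ = 1 := importanceRatio_self ℓ θ₀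
  refine ⟨?value, reinforceSurrogate_self ℓ θ₀ A, ?deriv, hasFDerivAt_reinforceSurrogate hℓ θ₀ A⟩
  case value => rw [hρ, clippedSurrogate_of_mem_Icc (Ioo_subset_Icc_self h1), one_mul]
  case deriv =>
    have hf := hasFDerivAt_clippedSurrogate_importanceRatio hℓ (hρ.symm ▸ h1) A
    rwa [hρ, one_smul] at hf

end PolicyRatio

/-- **First-order equivalence of the clipped surrogate and the linearized
surrogate.** With importance ratio `ρ(θ) = exp(ℓ(θ) - ℓ(θ₀))`, the clipped surrogate
`f(θ) = min(ρ(θ)·A, clip(ρ(θ), 1-ε, 1+ε)·A)` and the REINFORCE surrogate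
`g(θ) = A·(ℓ(θ) - ℓ(θ₀)) + A` agree at `θ₀` (both equal `A`) and have the same Fréchet
derivative `A • Dℓ(θ₀)` at `θ₀`. -/
theorem clipped_surrogate_first_order_equiv_reinforce
    {E : Type*} [NormedAddCommGroup E] [NormedSpace ℝ E]
    (θ₀ : E) (ε A : ℝ) (hε0 : 0 < ε) (hε1 : ε < 1)
    (ℓ : E → ℝ) (hℓ : DifferentiableAt ℝ ℓ θ₀) :
    (min (Real.exp (ℓ θ₀ - ℓ θ₀) * A)
        (clip (Real.exp (ℓ θ₀ - ℓ θ₀)) (1 - ε) (1 + ε) * A) = A) ∧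
    (A * (ℓ θ₀ - ℓ θ₀) + A = A) ∧
    HasFDerivAt
      (fun θ => min (Real.exp (ℓ θ - ℓ θ₀) * A)
        (clip (Real.exp (ℓ θ - ℓ θ₀)) (1 - ε) (1 + ε) * A))
      (A • fderiv ℝ ℓ θ₀) θ₀ ∧
    HasFDerivAt (fun θ => A * (ℓ θ - ℓ θ₀) + A) (A • fderiv ℝ ℓ θ₀) θ₀ := by
  exact clipped_surrogate_first_order_equiv_reinforce_general
    ⟨sub_lt_self 1 hε0, lt_add_of_pos_right 1 hε0⟩ A hℓ.hasFDerivAt
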